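/- arXiv:math/0103019 — 3 statements merged into one kernel-verified Lean document; each statement's English description precedes it below -/
import Mathlib

section
/- For a finitely generated projective Hopf algebra H over a commutative ring k, the k-module of left integrals ∫ℓ_{H*} = {f ∈ H* : gf = g(1)f for all g ∈ H*} is an invertible k-module (finitely generated projective of constant rank 1) and a k-direct summand of H*. -/
open scoped TensorProduct

/-- The convolution product on the dual of a coalgebra: `(g * f)(a) = Σ g(a₍₁₎) f(a₍₂₎)`. -/
noncomputable def conv (k H : Type*) [CommRing k] [AddCommGroup H] [Module k H]
    [Coalgebra k H] (g f : Module.Dual k H) : Module.Dual k H :=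
  LinearMap.mul' k k ∘ₗ TensorProduct.map g f ∘ₗ Coalgebra.comul

/-!
The dual `H*` is a right Hopf module over `H`, with action `(f · a)(x) = f(x S(a))` and with
coaction corresponding to `f ↦ (y ↦ ∑ f(y₍₂₎) y₍₁₎)` under `H* ⊗ H ≃ End H`; its coinvariants are
the left integrals. For any Hopf module `M`, the map `m ↦ ∑ m₍₀₎ S(m₍₁₎)` is a projection onto the
coinvariants, and the action gives `Mᶜᵒ ⊗ H ≃ M`. So the module `J` of left integrals is a direct
summand of `H*` with `J ⊗ H ≃ H*`, and comparing ranks, `J` has rank one. Evaluating the inverse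
image of the counit at `1` shows that the contraction `J ⊗ J* → k` is onto, hence bijective because
both sides have rank one.
-/

open Coalgebra HopfAlgebra WithConv LinearMap

lemma contractRight_surjective_of_surjective {R M N : Type*} [CommSemiring R] [AddCommMonoid M]
    [Module R M] [AddCommMonoid N] [Module R N] {φ : M ⊗[R] N →ₗ[R] R}
    (hφ : Function.Surjective φ) : Function.Surjective (contractRight R M) := by
  have factor : φ = contractRight R M ∘ₗ lTensor M (TensorProduct.curry φ).flip := by
    ext
    simp
  rw [factor, coe_comp] at hφ
  exact hφ.of_comp

section Rank

open Module

variable {R M N : Type*} [CommRing R] [AddCommGroup M] [Module R M] [AddCommGroup N] [Module R N]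
  [Module.Finite R M] [Projective R M]

lemma rankAtStalk_dual : rankAtStalk (R := R) (Dual R M) = rankAtStalk M := by
  ext p
  have : Nontrivial R := p.nontrivial
  have := finitePresentation_of_projective R M
  have : Free (Localization.AtPrime p.asIdeal) (LocalizedModule p.asIdeal.primeCompl M) :=
    free_of_flat_of_isLocalRing
  have : Free (Localization.AtPrime p.asIdeal) (LocalizedModule p.asIdeal.primeCompl R) :=
    free_of_flat_of_isLocalRing
  have e := FinitePresentation.linearEquivMapExtendScalars (R := R) (M := M) (N := R)
    p.asIdeal.primeCompl
  calc rankAtStalk (R := R) (Dual R M) p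
      = finrank (Localization.AtPrime p.asIdeal)
          (LocalizedModule p.asIdeal.primeCompl M →ₗ[Localization.AtPrime p.asIdeal]
            LocalizedModule p.asIdeal.primeCompl R) :=
        (e.extendScalarsOfIsLocalization p.asIdeal.primeCompl _).finrank_eq
    _ = rankAtStalk (R := R) M p * rankAtStalk (R := R) R p := finrank_linearMap ..
    _ = rankAtStalk (R := R) M p := by simp

lemma rankAtStalk_pos [FaithfulSMul R M] (p : PrimeSpectrum R) :
    0 < rankAtStalk (R := R) M p := by
  rw [rankAtStalk_pos_iff_mem_support, mem_support_iff_of_finite, annihilator_eq_bot.2 ‹_›]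
  exact bot_le

lemma contractRight_bijective_of_rankAtStalk_eq_one
    (hsurj : Function.Surjective (contractRight R M)) (hrank : rankAtStalk (R := R) M = 1) :
    Function.Bijective (contractRight R M) := by
  refine bijective_of_surjective_of_rankAtStalk_eq hsurj fun m hm ↦ ?_
  have : Nontrivial R := PrimeSpectrum.nontrivial ⟨m, hm.isPrime⟩
  rw [rankAtStalk_tensorProduct, rankAtStalk_dual, hrank, one_mul, rankAtStalk_self]

variable [Module.Finite R N] [Projective R N]

lemma rankAtStalk_eq_one_of_tensorProduct_equiv_dual [FaithfulSMul R N]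
    (e : M ⊗[R] N ≃ₗ[R] Dual R N) : rankAtStalk (R := R) M = 1 := by
  ext p
  have h := congrFun (rankAtStalk_eq_of_equiv e) p
  rw [rankAtStalk_tensorProduct, Pi.mul_apply, rankAtStalk_dual] at h
  exact Nat.eq_of_mul_eq_mul_right (rankAtStalk_pos p) (h.trans (one_mul _).symm)

end Rank

lemma tensorMap_mul_left_apply {k H M : Type*} [CommSemiring k] [Semiring H] [Algebra k H]
    [AddCommMonoid M] [Module k M] (f : H →ₗ[k] M) (a : H) (u : H ⊗[k] H) :
    TensorProduct.map f (LinearMap.mul k H a) u = f.rTensor H ((1 ⊗ₜ a) * u) := by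
  suffices TensorProduct.map f (LinearMap.mul k H a) = f.rTensor H ∘ₗ mulLeft k (1 ⊗ₜ a) from
    congr($this u)
  ext
  simp

section Antipode

variable {k H : Type*} [CommSemiring k] [Semiring H]

lemma algHom_convMul_comp_antipode [HopfAlgebra k H] {B : Type*} [Semiring B] [Algebra k B]
    (φ : H →ₐ[k] B) :
    toConv φ.toLinearMap * toConv (φ.toLinearMap ∘ₗ antipode k) = 1 := by
  have h := algHom_comp_convMul_distrib φ (toConv .id) (toConv (antipode k))
  rw [id_mul_antipode] at h
  exact WithConv.ext (h.symm.trans (by ext; simp))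

lemma comp_antipode_convMul_algHom [HopfAlgebra k H] {B : Type*} [Semiring B] [Algebra k B]
    (φ : H →ₐ[k] B) :
    toConv (φ.toLinearMap ∘ₗ antipode k) * toConv φ.toLinearMap = 1 := by
  have h := algHom_comp_convMul_distrib φ (toConv (antipode k)) (toConv .id)
  rw [antipode_mul_id] at h
  exact WithConv.ext (h.symm.trans (by ext; simp))

lemma includeLeft_convMul_includeRight [Bialgebra k H] :
    toConv (Algebra.TensorProduct.includeLeft : H →ₐ[k] H ⊗[k] H).toLinearMap *
        toConv (Algebra.TensorProduct.includeRight : H →ₐ[k] H ⊗[k] H).toLinearMap =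
      toConv (Bialgebra.comulAlgHom k H).toLinearMap := by
  ext c
  simp [(ℛ k c).convMul_apply, (ℛ k c).eq]

variable [HopfAlgebra k H]

lemma sum_comul_antipode_mul_tmul_one {h : H} {ι : Type*} (r : Repr k h ι) :
    ∑ i ∈ r.index, comul (R := k) (antipode k (r.left i)) * (r.right i ⊗ₜ[k] 1) =
      1 ⊗ₜ[k] antipode k h := by
  have hconv := left_inv_eq_right_inv
    ((mul_assoc _ _ _).trans <| includeLeft_convMul_includeRight (k := k) (H := H) ▸
      comp_antipode_convMul_algHom (Bialgebra.comulAlgHom k H))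
    (algHom_convMul_comp_antipode Algebra.TensorProduct.includeRight)
  simpa [r.convMul_apply] using congr($(hconv).ofConv h)

lemma sum_one_tmul_mul_comul_antipode {h : H} {ι : Type*} (r : Repr k h ι) :
    ∑ i ∈ r.index, (1 ⊗ₜ[k] r.left i) * comul (R := k) (antipode k (r.right i)) =
      antipode k h ⊗ₜ[k] 1 := by
  have hconv := left_inv_eq_right_inv
    (comp_antipode_convMul_algHom Algebra.TensorProduct.includeLeft)
    ((mul_assoc _ _ _).symm.trans <| includeLeft_convMul_includeRight (k := k) (H := H) ▸
      algHom_convMul_comp_antipode (Bialgebra.comulAlgHom k H))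
  simpa [r.convMul_apply] using congr($(hconv).ofConv h).symm

end Antipode

/-- A right Hopf module over a bialgebra `H`: a right `H`-module and right `H`-comodule `M` whose
coaction is `H`-linear for the diagonal action `(m ⊗ a) · (b ⊗ c) = m b ⊗ a c` on `M ⊗ H`. The
action is a bilinear map because Mathlib has no right modules or comodules over `H`. -/
structure RightHopfModule (k H M : Type*) [CommSemiring k] [Semiring H] [Bialgebra k H]
    [AddCommMonoid M] [Module k M] where
  act : M →ₗ[k] H →ₗ[k] M
  coact : M →ₗ[k] M ⊗[k] H
  act_one (m : M) : act m 1 = m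
  act_act (m : M) (a b : H) : act (act m a) b = act m (a * b)
  lTensor_counit_coact (m : M) : (counit (R := k) (A := H)).lTensor M (coact m) = m ⊗ₜ 1
  assoc_rTensor_coact_coact (m : M) :
    TensorProduct.assoc k M H H (coact.rTensor H (coact m)) = comul.lTensor M (coact m)
  coact_act (m : M) (a : H) :
    coact (act m a) = TensorProduct.map₂ act (LinearMap.mul k H) (coact m) (comul a)

namespace RightHopfModule

section Bialgebra

variable {k H M : Type*} [CommSemiring k] [Semiring H] [Bialgebra k H]
  [AddCommMonoid M] [Module k M] (X : RightHopfModule k H M)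

/-- The coinvariants of a Hopf module: the elements `m` with `ρ(m) = m ⊗ 1`. -/
def coinvariants : Submodule k M :=
  eqLocus X.coact ((TensorProduct.mk k M H).flip 1)

variable {X} in
lemma mem_coinvariants {m : M} : m ∈ X.coinvariants ↔ X.coact m = m ⊗ₜ 1 := Iff.rfl

lemma coact_act_of_mem_coinvariants {m : M} (hm : m ∈ X.coinvariants) (a : H) :
    X.coact (X.act m a) = (X.act m).rTensor H (comul a) := by
  rw [X.coact_act, mem_coinvariants.1 hm, TensorProduct.map₂_apply_tmul,
    tensorMap_mul_left_apply, ← Algebra.TensorProduct.one_def, one_mul]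

end Bialgebra

variable {k H M : Type*} [CommSemiring k] [Semiring H] [HopfAlgebra k H]
  [AddCommMonoid M] [Module k M] (X : RightHopfModule k H M)

/-- The endomorphism `m ↦ ∑ m₍₀₎ S(m₍₁₎)`, which projects a Hopf module onto its coinvariants. -/
noncomputable def proj : M →ₗ[k] M :=
  TensorProduct.lift X.act ∘ₗ (antipode k).lTensor M ∘ₗ X.coact

lemma proj_mem_coinvariants (m : M) : X.proj m ∈ X.coinvariants := by
  let diag := TensorProduct.lift (TensorProduct.map₂ X.act (LinearMap.mul k H)) ∘ₗ
    (comul ∘ₗ antipode k).lTensor (M ⊗[k] H)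
  have coact_lift : X.coact ∘ₗ TensorProduct.lift X.act ∘ₗ (antipode k).lTensor M =
      diag ∘ₗ X.coact.rTensor H := by
    ext m a
    simp [diag, X.coact_act]
  have diag_comul : diag ∘ₗ (TensorProduct.assoc k M H H).symm.toLinearMap ∘ₗ comul.lTensor M =
      (TensorProduct.mk k M H).flip 1 ∘ₗ TensorProduct.lift X.act ∘ₗ (antipode k).lTensor M := by
    refine TensorProduct.ext' fun m a ↦ ?_
    have h := congr((X.act m).rTensor H $(sum_one_tmul_mul_comul_antipode (ℛ k a)))
    simp only [map_sum, rTensor_tmul] at h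
    simp [diag, ← (ℛ k a).eq, TensorProduct.tmul_sum, tensorMap_mul_left_apply, h]
  rw [mem_coinvariants]
  calc X.coact (X.proj m) = diag (X.coact.rTensor H (X.coact m)) := congr($coact_lift (X.coact m))
    _ = diag ((TensorProduct.assoc k M H H).symm (comul.lTensor M (X.coact m))) := by
      rw [← X.assoc_rTensor_coact_coact, LinearEquiv.symm_apply_apply]
    _ = X.proj m ⊗ₜ 1 := congr($diag_comul (X.coact m))

/-- `RightHopfModule.proj` with codomain the coinvariants. -/
noncomputable def projCoinvariants : M →ₗ[k] X.coinvariants :=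
  X.proj.codRestrict X.coinvariants X.proj_mem_coinvariants

lemma projCoinvariants_act (m : X.coinvariants) (a : H) :
    X.projCoinvariants (X.act m a) = counit (R := k) a • m := by
  refine Subtype.ext ?_
  simp only [projCoinvariants, proj, codRestrict_apply, comp_apply,
    X.coact_act_of_mem_coinvariants m.2, ← (ℛ k a).eq, map_sum, rTensor_tmul, lTensor_tmul,
    TensorProduct.lift.tmul, X.act_act]
  rw [← map_sum, sum_mul_antipode_eq_smul, map_smul, X.act_one, Submodule.coe_smul]

lemma projCoinvariants_coe (m : X.coinvariants) : X.projCoinvariants m = m := by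
  simpa [X.act_one] using X.projCoinvariants_act m 1

lemma projCoinvariants_comp_subtype : X.projCoinvariants ∘ₗ X.coinvariants.subtype = .id :=
  LinearMap.ext X.projCoinvariants_coe

lemma finite_coinvariants [Module.Finite k M] : Module.Finite k X.coinvariants :=
  .of_surjective _ (surjective_of_comp_eq_id _ _ X.projCoinvariants_comp_subtype)

lemma projective_coinvariants [Module.Projective k M] : Module.Projective k X.coinvariants :=
  .of_split _ _ X.projCoinvariants_comp_subtype

lemma lift_act_rTensor_proj_coact (m : M) :
    TensorProduct.lift X.act (X.proj.rTensor H (X.coact m)) = m := by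
  have act_proj : TensorProduct.lift X.act ∘ₗ
        (TensorProduct.lift X.act ∘ₗ (antipode k).lTensor M).rTensor H =
      TensorProduct.lift X.act ∘ₗ (mul' k H ∘ₗ (antipode k).rTensor H).lTensor M ∘ₗ
        (TensorProduct.assoc k M H H).toLinearMap := by
    ext m a b
    simp [X.act_act]
  have antipode_mul : (mul' k H ∘ₗ (antipode k).rTensor H) ∘ₗ comul =
      Algebra.linearMap k H ∘ₗ counit := by
    ext a
    simp
  calc TensorProduct.lift X.act (X.proj.rTensor H (X.coact m))
      = TensorProduct.lift X.act ((mul' k H ∘ₗ (antipode k).rTensor H).lTensor M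
          (TensorProduct.assoc k M H H (X.coact.rTensor H (X.coact m)))) := by
        rw [proj, ← comp_assoc, rTensor_comp]
        exact congr($act_proj (X.coact.rTensor H (X.coact m)))
    _ = TensorProduct.lift X.act ((Algebra.linearMap k H).lTensor M
          (counit.lTensor M (X.coact m))) := by
        rw [X.assoc_rTensor_coact_coact, ← lTensor_comp_apply, antipode_mul, lTensor_comp_apply]
    _ = m := by simp [X.lTensor_counit_coact, X.act_one]

/-- The fundamental theorem of Hopf modules: the action restricts to an isomorphism
`Mᶜᵒ ⊗ H ≃ M`, where `Mᶜᵒ` denotes the coinvariants. -/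
noncomputable def coinvariantsTensorEquiv : X.coinvariants ⊗[k] H ≃ₗ[k] M :=
  .ofLinearMap (TensorProduct.lift X.act ∘ₗ X.coinvariants.subtype.rTensor H)
    (X.projCoinvariants.rTensor H ∘ₗ X.coact)
    (by
      ext m
      rw [comp_apply, comp_apply, comp_apply, ← rTensor_comp_apply]
      exact X.lift_act_rTensor_proj_coact m)
    (by
      refine TensorProduct.ext' fun m a ↦ ?_
      have h : X.projCoinvariants ∘ₗ X.act m = toSpanSingleton k _ m ∘ₗ counit :=
        LinearMap.ext (X.projCoinvariants_act m)
      rw [comp_apply, comp_apply, comp_apply, rTensor_tmul, TensorProduct.lift.tmul,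
        Submodule.subtype_apply, X.coact_act_of_mem_coinvariants m.2, ← rTensor_comp_apply, h,
        rTensor_comp_apply, rTensor_counit_comul]
      simp)

section DualCoaction

section Coalgebra

variable {k H : Type*} [CommSemiring k] [AddCommMonoid H] [Module k H] [Coalgebra k H]

variable (k H) in
/-- The left action `f ⇀ y = ∑ f(y₍₂₎) y₍₁₎` of the dual of a coalgebra `H` on `H`. -/
noncomputable def dualHit : Module.Dual k H →ₗ[k] H →ₗ[k] H :=
  lcomp k H comul ∘ₗ compRight k (TensorProduct.rid k H).toLinearMap ∘ₗ lTensorHom H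

lemma dualHit_apply (f : Module.Dual k H) (y : H) :
    dualHit k H f y = TensorProduct.rid k H (f.lTensor H (comul y)) := rfl

lemma dualHit_apply_eq_sum (f : Module.Dual k H) {y : H} {ι : Type*} (r : Repr k y ι) :
    dualHit k H f y = ∑ i ∈ r.index, f (r.right i) • r.left i := by
  simp [dualHit_apply, ← r.eq]

lemma counit_comp_dualHit (f : Module.Dual k H) : counit ∘ₗ dualHit k H f = f := by
  ext y
  conv_rhs => rw [← sum_counit_smul (ℛ k y)]
  simp [dualHit_apply_eq_sum f (ℛ k y), mul_comm]

variable [Module.Finite k H] [Module.Projective k H]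

variable (k H) in
/-- The map `H* → H* ⊗ H` corresponding to `dualHit` under `H* ⊗ H ≃ End H`; over a bialgebra it is
a right coaction of `H` on `H*`. -/
noncomputable def dualCoact : Module.Dual k H →ₗ[k] Module.Dual k H ⊗[k] H :=
  (dualTensorHomEquiv k H H).symm.toLinearMap ∘ₗ dualHit k H

lemma dualTensorHom_dualCoact (f : Module.Dual k H) :
    dualTensorHom k H H (dualCoact k H f) = dualHit k H f :=
  (dualTensorHomEquiv k H H).apply_symm_apply _

end Coalgebra

variable {k H : Type*} [CommSemiring k] [Semiring H] [Algebra k H] [Coalgebra k H]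

lemma toConv_dualHit (f : Module.Dual k H) :
    toConv (dualHit k H f) = toConv .id * toConv (Algebra.linearMap k H ∘ₗ f) := by
  ext y
  simp [(ℛ k y).convMul_apply, dualHit_apply_eq_sum f (ℛ k y), Algebra.smul_def,
    Algebra.commutes]

lemma algHom_comp_dualHit {B : Type*} [Semiring B] [Algebra k B] (φ : H →ₐ[k] B)
    (f : Module.Dual k H) :
    toConv (φ.toLinearMap ∘ₗ dualHit k H f) =
      toConv φ.toLinearMap * toConv (Algebra.linearMap k B ∘ₗ f) := by
  have map_scalars : φ.toLinearMap ∘ₗ Algebra.linearMap k H = Algebra.linearMap k B := by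
    ext
    simp
  have h := algHom_comp_convMul_distrib φ (toConv .id) (toConv (Algebra.linearMap k H ∘ₗ f))
  rw [← toConv_dualHit, ofConv_toConv, ofConv_toConv, ofConv_toConv, ← comp_assoc,
    map_scalars] at h
  exact WithConv.ext h

lemma dualTensorHom_assoc_rTensor_dualCoact [Module.Finite k H] [Module.Projective k H]
    (t : Module.Dual k H ⊗[k] H) :
    toConv (dualTensorHom k H (H ⊗[k] H)
        (TensorProduct.assoc k _ H H ((dualCoact k H).rTensor H t))) =
      toConv (Algebra.TensorProduct.includeLeft : H →ₐ[k] H ⊗[k] H).toLinearMap *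
        toConv ((Algebra.TensorProduct.includeRight : H →ₐ[k] H ⊗[k] H).toLinearMap ∘ₗ
          dualTensorHom k H H t) := by
  have assoc_tmul (s : Module.Dual k H ⊗[k] H) (b y : H) :
      dualTensorHom k H (H ⊗[k] H) (TensorProduct.assoc k _ H H (s ⊗ₜ b)) y =
        dualTensorHom k H H s y ⊗ₜ b := by
    induction s with
    | zero => simp
    | add s t hs ht => simp only [map_add, LinearMap.add_apply, TensorProduct.add_tmul, hs, ht]
    | tmul g a => simp [TensorProduct.smul_tmul']
  induction t with
  | zero => simp
  | add s t hs ht => simp only [map_add, comp_add, toConv_add, mul_add, hs, ht]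
  | tmul g b =>
    ext y
    simp [assoc_tmul, dualTensorHom_dualCoact, dualHit_apply_eq_sum g (ℛ k y),
      (ℛ k y).convMul_apply, TensorProduct.sum_tmul, TensorProduct.smul_tmul']

lemma comul_comp_dualHit {k H : Type*} [CommSemiring k] [Semiring H] [Bialgebra k H]
    (f : Module.Dual k H) :
    toConv (comul ∘ₗ dualHit k H f) =
      toConv (Algebra.TensorProduct.includeLeft : H →ₐ[k] H ⊗[k] H).toLinearMap *
        toConv ((Algebra.TensorProduct.includeRight : H →ₐ[k] H ⊗[k] H).toLinearMap ∘ₗ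
          dualHit k H f) := by
  rw [algHom_comp_dualHit, ← mul_assoc, includeLeft_convMul_includeRight]
  exact algHom_comp_dualHit (Bialgebra.comulAlgHom k H) f

end DualCoaction

section Dual

variable {k H : Type*} [CommSemiring k] [Semiring H] [HopfAlgebra k H]

variable (k H) in
/-- The right action `(f · a)(x) = f(x S(a))` of a Hopf algebra on its dual. -/
noncomputable def dualAct : Module.Dual k H →ₗ[k] H →ₗ[k] Module.Dual k H :=
  (llcomp k H H k).compl₂ ((LinearMap.mul k H).flip ∘ₗ antipode k)

@[simp]
lemma dualAct_apply (f : Module.Dual k H) (a x : H) : dualAct k H f a x = f (x * antipode k a) :=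
  rfl

lemma sum_dualHit_mul_antipode_mul (f : Module.Dual k H) (y : H) {a : H} {ι : Type*}
    (r : Repr k a ι) :
    ∑ i ∈ r.index, dualHit k H f (y * antipode k (r.left i)) * r.right i =
      dualHit k H (dualAct k H f a) y := by
  have rid_mul (u : H ⊗[k] H) (b : H) : TensorProduct.rid k H (f.lTensor H u) * b =
      TensorProduct.rid k H (f.lTensor H (u * (b ⊗ₜ 1))) := by
    induction u with
    | zero => simp
    | add u v hu hv => simp only [map_add, add_mul, hu, hv]
    | tmul c d => simp
  have lTensor_dualAct (u : H ⊗[k] H) :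
      (dualAct k H f a).lTensor H u = f.lTensor H (u * (1 ⊗ₜ antipode k a)) := by
    induction u with
    | zero => simp
    | add u v hu hv => simp only [map_add, add_mul, hu, hv]
    | tmul c d => simp
  simp only [dualHit_apply, rid_mul, lTensor_dualAct, Bialgebra.comul_mul, mul_assoc,
    ← map_sum, ← Finset.mul_sum, sum_comul_antipode_mul_tmul_one]

lemma dualTensorHom_map₂_dualAct (t : Module.Dual k H ⊗[k] H) (a b y : H) :
    dualTensorHom k H H
        (TensorProduct.map₂ (dualAct k H) (LinearMap.mul k H) t (a ⊗ₜ b)) y =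
      dualTensorHom k H H t (y * antipode k a) * b := by
  induction t with
  | zero => simp
  | add s t hs ht => simp only [map_add, LinearMap.add_apply, add_mul, hs, ht]
  | tmul g c => simp

variable [Module.Finite k H] [Module.Projective k H]

variable (k H) in
/-- The dual of a finite projective Hopf algebra `H` as a right Hopf module over `H`. -/
noncomputable def dual : RightHopfModule k H (Module.Dual k H) where
  act := dualAct k H
  coact := dualCoact k H
  act_one f := by ext; simp
  act_act f a b := by ext; simp [antipode_mul_antidistrib, mul_assoc]
  lTensor_counit_coact f := by
    refine (dualTensorHomEquiv k H k).injective ?_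
    change dualTensorHom k H k (lTensor _ counit (dualCoact k H f)) = dualTensorHom k H k (f ⊗ₜ 1)
    rw [← comp_apply (dualTensorHom k H k), dualTensorHom_comp_lTensor, comp_apply,
      dualTensorHom_dualCoact, compRight_apply, counit_comp_dualHit]
    ext
    simp
  assoc_rTensor_coact_coact f := by
    refine (dualTensorHomEquiv k H (H ⊗[k] H)).injective (toConv_injective ?_)
    change toConv (dualTensorHom k H _ _) = toConv (dualTensorHom k H _ (comul.lTensor _ _))
    rw [dualTensorHom_assoc_rTensor_dualCoact, dualTensorHom_dualCoact,
      ← comul_comp_dualHit, ← comp_apply (dualTensorHom k H _), dualTensorHom_comp_lTensor,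
      comp_apply, dualTensorHom_dualCoact, compRight_apply]
  coact_act f a := by
    refine (dualTensorHomEquiv k H H).injective (LinearMap.ext fun y ↦ ?_)
    change dualTensorHom k H H (dualCoact k H _) y = dualTensorHom k H H _ y
    rw [← (ℛ k a).eq]
    simp only [map_sum, LinearMap.sum_apply, dualTensorHom_map₂_dualAct, dualTensorHom_dualCoact,
      sum_dualHit_mul_antipode_mul]

lemma mem_coinvariants_dual_iff {f : Module.Dual k H} :
    f ∈ (dual k H).coinvariants ↔ ∀ y, dualHit k H f y = f y • 1 := by
  rw [mem_coinvariants, ← (dualTensorHomEquiv k H H).injective.eq_iff, LinearMap.ext_iff]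
  change (∀ y, dualTensorHom k H H (dualCoact k H f) y = dualTensorHom k H H (f ⊗ₜ 1) y) ↔ _
  simp only [dualTensorHom_dualCoact, dualTensorHom_apply]

end Dual

lemma conv_apply_eq_apply_dualHit {k H : Type*} [CommRing k] [AddCommGroup H] [Module k H]
    [Coalgebra k H] (g f : Module.Dual k H) (y : H) :
    conv k H g f y = g (dualHit k H f y) := by
  simp [conv, dualHit_apply, ← (ℛ k y).eq, mul_comm]

lemma mem_coinvariants_dual_iff_conv {k H : Type*} [CommRing k] [Ring H] [HopfAlgebra k H]
    [Module.Finite k H] [Module.Projective k H] {f : Module.Dual k H} :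
    f ∈ (dual k H).coinvariants ↔ ∀ g : Module.Dual k H, conv k H g f = g 1 • f := by
  rw [mem_coinvariants_dual_iff]
  refine ⟨fun h g ↦ LinearMap.ext fun y ↦ ?_, fun h y ↦ Module.eval_apply_injective k ?_⟩
  · simp [conv_apply_eq_apply_dualHit, h, mul_comm]
  · ext g
    simpa [conv_apply_eq_apply_dualHit, mul_comm] using congr($(h g) y)

end RightHopfModule

/-- For a finitely generated projective Hopf `k`-algebra `H`, the `k`-module of left
integrals in `H*`, namely `{f | g * f = g(1) f for all g}` (convolution product), is an
invertible `k`-module (f.g. projective of rank 1, i.e. with bijective evaluation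
`J ⊗ J* → k`) and a `k`-direct summand of `H*`. -/
theorem left_integrals_invertible (k H : Type*) [CommRing k] [Ring H] [HopfAlgebra k H]
    [Module.Finite k H] [Module.Projective k H] :
    ∃ J : Submodule k (Module.Dual k H),
      (↑J = {f : Module.Dual k H | ∀ g : Module.Dual k H, conv k H g f = g 1 • f}) ∧
      Module.Finite k ↥J ∧ Module.Projective k ↥J ∧
      Function.Bijective (contractRight k ↥J) ∧
      ∃ π : Module.Dual k H →ₗ[k] ↥J, ∀ x : ↥J, π ↑x = x := by
  let X := RightHopfModule.dual k H
  have finite : Module.Finite k X.coinvariants := X.finite_coinvariants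
  have projective : Module.Projective k X.coinvariants := X.projective_coinvariants
  have faithful : FaithfulSMul k H :=
    (faithfulSMul_iff_algebraMap_injective k H).2 (Bialgebra.algebraMap_injective H)
  let evalOne := Module.Dual.eval k H 1 ∘ₗ X.coinvariantsTensorEquiv.toLinearMap
  have evalOne_surjective : Function.Surjective evalOne := fun r ↦
    ⟨X.coinvariantsTensorEquiv.symm (r • counit), by simp [evalOne]⟩
  have bijective : Function.Bijective (contractRight k X.coinvariants) :=
    contractRight_bijective_of_rankAtStalk_eq_one (M := X.coinvariants)
      (contractRight_surjective_of_surjective evalOne_surjective)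
      (rankAtStalk_eq_one_of_tensorProduct_equiv_dual (N := H) X.coinvariantsTensorEquiv)
  exact ⟨X.coinvariants, Set.ext fun _ ↦ RightHopfModule.mem_coinvariants_dual_iff_conv,
    finite, projective, bijective, X.projCoinvariants, X.projCoinvariants_coe⟩
end

section
/- The antipode S of a finitely generated projective Hopf algebra H over a commutative ring k is bijective. -/
/-!
Convolution inverses show that an algebra map `α` out of `H` is determined by `α ∘ S`, so `S²` is an
epimorphism among algebra endomorphisms of `H`, and so are its powers. When `H` has finite length
over `k`, Fitting's lemma makes the projection onto the range of a large power `P` of `S²` along its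
kernel an algebra map `π` with `π ∘ P = P`. Hence `π = id`, and `P` and `S` are injective.

Over an arbitrary base this applies to the fibres of `H` at the primes of `k`. A map of modules with
finite target is surjective once it is so on fibres, and a surjective endomorphism of a finite
module is injective.
-/

open HopfAlgebra TensorProduct WithConv

section Antipode

variable {k H B : Type*} [CommSemiring k] [Semiring H] [HopfAlgebra k H] [Semiring B] [Algebra k B]

theorem toConv_mul_toConv_comp_antipode (α : H →ₐ[k] B) :
    toConv α.toLinearMap * toConv (α.toLinearMap ∘ₗ antipode k) = 1 := by
  have h := LinearMap.algHom_comp_convMul_distrib α (toConv .id) (toConv (antipode k))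
  rw [LinearMap.id_mul_antipode] at h
  refine (WithConv.ofConv_injective h).symm.trans ?_
  ext x
  simp

theorem toConv_comp_antipode_mul_toConv (α : H →ₐ[k] B) :
    toConv (α.toLinearMap ∘ₗ antipode k) * toConv α.toLinearMap = 1 := by
  have h := LinearMap.algHom_comp_convMul_distrib α (toConv (antipode k)) (toConv .id)
  rw [LinearMap.antipode_mul_id] at h
  refine (WithConv.ofConv_injective h).symm.trans ?_
  ext x
  simp

theorem algHom_comp_antipode_injective :
    Function.Injective fun α : H →ₐ[k] B ↦ α.toLinearMap ∘ₗ antipode k := by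
  intro α β (h : α.toLinearMap ∘ₗ antipode k = β.toLinearMap ∘ₗ antipode k)
  have hα := toConv_mul_toConv_comp_antipode α
  rw [h] at hα
  exact AlgHom.toLinearMap_injective <| WithConv.toConv_injective <|
    left_inv_eq_right_inv hα (toConv_comp_antipode_mul_toConv β)

variable (k H) in
/-- The square of the antipode. The antipode reverses products, so its square is an algebra
endomorphism, to which the monoid structure on `H →ₐ[k] H` applies. -/
noncomputable def antipodeSq : H →ₐ[k] H :=
  .ofLinearMap (antipode k ∘ₗ antipode k) (by simp) (by simp [antipode_mul_antidistrib])

@[simp]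
theorem antipodeSq_apply (x : H) : antipodeSq k H x = antipode k (antipode k x) :=
  rfl

theorem isRightRegular_antipodeSq : IsRightRegular (antipodeSq k H) := by
  intro α β h
  have hop : (AlgHom.op α).comp (antipodeAlgHomOp k H) =
      (AlgHom.op β).comp (antipodeAlgHomOp k H) := by
    apply algHom_comp_antipode_injective
    ext x
    simpa using DFunLike.congr_fun h x
  apply algHom_comp_antipode_injective
  ext x
  simpa using DFunLike.congr_fun hop x

end Antipode

section Fitting

variable {k A : Type*} [CommRing k] [Ring A] [Algebra k A]

theorem map_projection_ker {M N : Type*} [AddCommGroup M] [Module k M] [AddCommGroup N]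
    [Module k N] (f : M →ₗ[k] N) {p : Submodule k M} (h : IsCompl p f.ker) (x : M) :
    f (p.projection f.ker h x) = f x := by
  have hx : f (x - p.projection f.ker h x) = 0 := Submodule.sub_projection_mem h x
  rw [map_sub, sub_eq_zero] at hx
  exact hx.symm

/-- The projection onto the range of an algebra endomorphism `φ` along its kernel, for `φ` whose
range and kernel are complementary. It is multiplicative because the range is a subalgebra and the
kernel is an ideal. -/
noncomputable def rangeProjection (φ : A →ₐ[k] A)
    (h : IsCompl φ.toLinearMap.range φ.toLinearMap.ker) : A →ₐ[k] A :=
  .ofLinearMap (φ.toLinearMap.range.projection φ.toLinearMap.ker h)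
    (Submodule.projection_apply_of_mem_left h ⟨1, map_one φ⟩) fun x y ↦ by
      set π := φ.toLinearMap.range.projection φ.toLinearMap.ker h
      have hker : x * y - π x * π y ∈ φ.toLinearMap.ker := by
        have hπ (z : A) : φ (π z) = φ z := map_projection_ker φ.toLinearMap h z
        simp [hπ]
      have hrange : π x * π y ∈ φ.toLinearMap.range :=
        φ.range.mul_mem (Submodule.projection_apply_mem h x) (Submodule.projection_apply_mem h y)
      rw [← Submodule.projection_apply_of_mem_left h hrange, ← sub_eq_zero, ← map_sub]
      exact Submodule.projection_apply_of_mem_right h hker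

theorem rangeProjection_mul_self (φ : A →ₐ[k] A)
    (h : IsCompl φ.toLinearMap.range φ.toLinearMap.ker) : rangeProjection φ h * φ = φ := by
  ext x
  exact Submodule.projection_apply_of_mem_left h ⟨x, rfl⟩

theorem algHom_injective_of_isRightRegular_of_isCompl {φ : A →ₐ[k] A} (hφ : IsRightRegular φ)
    (h : IsCompl φ.toLinearMap.range φ.toLinearMap.ker) : Function.Injective φ := by
  have hπ : rangeProjection φ h = 1 :=
    hφ ((rangeProjection_mul_self φ h).trans (one_mul φ).symm)
  rw [injective_iff_map_eq_zero]
  intro x hx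
  calc x = rangeProjection φ h x := by rw [hπ, AlgHom.one_apply]
    _ = 0 := Submodule.projection_apply_of_mem_right h hx

theorem algHom_injective_of_isRightRegular [IsArtinian k A] [IsNoetherian k A] {φ : A →ₐ[k] A}
    (hφ : IsRightRegular φ) : Function.Injective φ := by
  obtain ⟨n, hcompl, hn⟩ := ((AlgHom.toEnd φ).eventually_isCompl_ker_pow_range_pow.and
    (Filter.eventually_ne_atTop 0)).exists
  rw [← map_pow] at hcompl
  have hpow : Function.Injective (φ ^ n) :=
    algHom_injective_of_isRightRegular_of_isCompl (hφ.pow n) hcompl.symm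
  obtain ⟨m, rfl⟩ := Nat.exists_eq_succ_of_ne_zero hn
  rw [pow_succ] at hpow
  exact Function.Injective.of_comp (f := φ ^ m) hpow

end Fitting

theorem antipode_bijective_of_isArtinian_of_isNoetherian (k H : Type*) [CommRing k] [Ring H]
    [HopfAlgebra k H] [IsArtinian k H] [IsNoetherian k H] :
    Function.Bijective (antipode k (A := H)) := by
  have hsq : Function.Injective (antipodeSq k H) :=
    algHom_injective_of_isRightRegular isRightRegular_antipodeSq
  have hinj : Function.Injective (antipode k (A := H)) := .of_comp (f := antipode k) hsq
  exact IsArtinian.bijective_of_injective_endomorphism _ hinj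

section Fibers

variable {R M N : Type*} [CommRing R] [AddCommGroup M] [Module R M] [AddCommGroup N] [Module R N]

theorem subsingleton_of_forall_residueField_tensorProduct [Module.Finite R M]
    (h : ∀ p : PrimeSpectrum R, Subsingleton (p.asIdeal.ResidueField ⊗[R] M)) :
    Subsingleton M := by
  rw [← Module.support_eq_empty_iff (R := R), Set.eq_empty_iff_forall_notMem]
  intro p
  rw [Module.mem_support_iff_nontrivial_residueField_tensorProduct, not_nontrivial_iff_subsingleton]
  exact h p

theorem surjective_of_forall_residueField_lTensor [Module.Finite R N] (f : M →ₗ[R] N)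
    (h : ∀ p : PrimeSpectrum R, Function.Surjective (f.lTensor p.asIdeal.ResidueField)) :
    Function.Surjective f := by
  rw [← LinearMap.range_eq_top, ← Submodule.Quotient.subsingleton_iff]
  refine subsingleton_of_forall_residueField_tensorProduct (R := R) fun p ↦ ?_
  have hsurj : Function.Surjective (f.range.mkQ.lTensor p.asIdeal.ResidueField) :=
    LinearMap.lTensor_surjective _ f.range.mkQ_surjective
  have hzero : f.range.mkQ.lTensor p.asIdeal.ResidueField ∘ₗ f.lTensor _ = 0 := by
    rw [← LinearMap.lTensor_comp, LinearMap.range_mkQ_comp, LinearMap.lTensor_zero]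
  refine subsingleton_of_forall_eq 0 fun q ↦ ?_
  obtain ⟨x, rfl⟩ := (hsurj.comp (h p)) q
  exact LinearMap.congr_fun hzero x

end Fibers

theorem coe_antipode_baseChange (k K H : Type*) [CommSemiring k] [CommSemiring K] [Algebra k K]
    [Semiring H] [HopfAlgebra k H] :
    ⇑(antipode K (A := K ⊗[k] H)) = (antipode k (A := H)).lTensor K :=
  rfl

theorem antipode_bijective_general (k H : Type*) [CommRing k] [Ring H] [HopfAlgebra k H]
    [Module.Finite k H] : Function.Bijective (antipode k (A := H)) := by
  have hsurj : Function.Surjective (antipode k (A := H)) := by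
    refine surjective_of_forall_residueField_lTensor _ fun p ↦ ?_
    rw [← coe_antipode_baseChange]
    exact (antipode_bijective_of_isArtinian_of_isNoetherian _ _).surjective
  exact ⟨OrzechProperty.injective_of_surjective_endomorphism _ hsurj, hsurj⟩

/-- The antipode of a finitely generated projective Hopf algebra over a commutative ring
is bijective. -/
theorem antipode_bijective (k H : Type*) [CommRing k] [Ring H] [HopfAlgebra k H]
    [Module.Finite k H] [Module.Projective k H] :
    Function.Bijective (HopfAlgebra.antipode (R := k) (A := H)) :=
  antipode_bijective_general k H
end

section
/- If H is a Hopf algebra over a commutative ring k that is finitely generated projective over k and is a Frobenius k-algebra, then H is an FH-algebra, i.e., the space of left integrals in H* is free of rank 1 and H admits a left integral in H* as Frobenius homomorphism. -/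
/-!
Under `H ≅ H*` the counit corresponds to a right integral `t ∈ H`, and the image `ψ` of `1`
satisfies `ψ t = 1`. Let `f ⇀ t = t₍₁₎ f(t₍₂₎)`. As `t` is a right integral,
`t₍₁₎ a ⊗ t₍₂₎ = t₍₁₎ ⊗ t₍₂₎ S(a)`, so the elements `f ⇀ t` form a right ideal. It contains
`1 = ψ(t) 1 = u₍₁₎ S(u₍₂₎)`, where `u = ψ ⇀ t`, because `Δ u` is a sum of tensors `(f ⇀ u) ⊗ y` and
`f ⇀ u = (f * ψ) ⇀ t`. Thus `f ↦ f ⇀ t` is a surjection `H* → H`, hence a bijection, and the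
Frobenius homomorphism is the `φ` with `φ ⇀ t = 1`: both `g * φ` and `g(1) φ` are sent to `g(1) 1`,
while `φ(· S(a)) ⇀ t = a` makes the form `(a, b) ↦ φ(ab)` perfect.
-/

open scoped TensorProduct

open Coalgebra HopfAlgebra WithConv
open Algebra.TensorProduct (includeLeft includeRight)
open Module (Dual)

section Pairing

variable {k M : Type*} [CommRing k] [AddCommGroup M] [Module k M]

theorem isPerfPair_of_surjective [Module.Finite k M] [Module.IsReflexive k M]
    {p : M →ₗ[k] M →ₗ[k] k} (hp : Function.Surjective p) : p.IsPerfPair := by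
  have hflip : Function.Injective p.flip := fun x y hxy =>
    (Module.bijective_dual_eval k M).injective <| LinearMap.ext fun f => by
      obtain ⟨z, rfl⟩ := hp f
      exact LinearMap.congr_fun hxy z
  have : Module.Finite k (Dual k M) := .of_surjective p hp
  exact .of_bijective p ⟨OrzechProperty.injective_of_surjective_of_injective p.flip p hflip hp, hp⟩

end Pairing

section Slice

variable {k M N P : Type*} [CommSemiring k] [AddCommMonoid M] [Module k M]
  [AddCommMonoid N] [Module k N] [AddCommMonoid P] [Module k P]

/-- The slice map `x ⊗ y ↦ f y • x` applying a functional to the right tensor factor. -/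
noncomputable def slice (M : Type*) [AddCommMonoid M] [Module k M] (f : Dual k N) :
    M ⊗[k] N →ₗ[k] M :=
  (TensorProduct.rid k M).toLinearMap ∘ₗ f.lTensor M

@[simp]
theorem slice_tmul (f : Dual k N) (x : M) (y : N) : slice M f (x ⊗ₜ[k] y) = f y • x := by
  simp [slice]

theorem slice_rTensor (u : M →ₗ[k] P) (f : Dual k N) (X : M ⊗[k] N) :
    slice P f (u.rTensor N X) = u (slice M f X) := by
  rw [← LinearMap.comp_apply, ← LinearMap.comp_apply]
  congr 1
  ext
  simp

theorem slice_assoc_symm (f : Dual k N) (X : M ⊗[k] (P ⊗[k] N)) :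
    slice (M ⊗[k] P) f ((TensorProduct.assoc k M P N).symm X) = (slice P f).lTensor M X := by
  rw [← LinearEquiv.coe_coe, ← LinearMap.comp_apply]
  congr 1
  ext
  simp

theorem exists_eq_sum_slice_tmul [Module.Projective k N] (X : M ⊗[k] N) :
    ∃ (s : Finset N) (d : N → Dual k N), X = ∑ y ∈ s, slice M (d y) X ⊗ₜ[k] y := by
  classical
  obtain ⟨σ, hσ⟩ := Module.projective_def'.mp ‹Module.Projective k N›
  let coord : M ⊗[k] N →ₗ[k] N →₀ M :=
    (TensorProduct.finsuppScalarRight k k M N).toLinearMap ∘ₗ σ.lTensor M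
  have coord_apply (y : N) : coord X y = slice M (Finsupp.lapply y ∘ₗ σ) X := by
    simp [coord, slice, TensorProduct.finsuppScalarRight_apply, LinearMap.lTensor_comp,
      TensorProduct.AlgebraTensorModule.rid_eq_rid]
  let expand : (N →₀ M) →ₗ[k] M ⊗[k] N :=
    Finsupp.lsum k fun y => (TensorProduct.mk k M N).flip y
  have expand_comp : expand ∘ₗ (TensorProduct.finsuppScalarRight k k M N).toLinearMap =
      (Finsupp.linearCombination k id).lTensor M := by
    ext
    simp [expand, TensorProduct.finsuppScalarRight_apply_tmul]
  have expand_coord : expand (coord X) = X := by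
    have := LinearMap.congr_fun expand_comp (σ.lTensor M X)
    rwa [← LinearMap.comp_apply (LinearMap.lTensor _ _), ← LinearMap.lTensor_comp, hσ,
      LinearMap.lTensor_id] at this
  refine ⟨(coord X).support, fun y => Finsupp.lapply y ∘ₗ σ, ?_⟩
  conv_lhs => rw [← expand_coord]
  simp [expand, Finsupp.sum, coord_apply]

end Slice

section SliceMul

variable {k A : Type*} [CommSemiring k] [Semiring A] [Algebra k A]

theorem slice_mul_tmul_one (f : Dual k A) (X : A ⊗[k] A) (a : A) :
    slice A f (X * a ⊗ₜ[k] 1) = slice A f X * a := by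
  induction X with
  | zero => simp
  | add X Y hX hY => simp only [add_mul, map_add, hX, hY]
  | tmul x y => simp

theorem slice_mul_one_tmul (f : Dual k A) (X : A ⊗[k] A) (b : A) :
    slice A f (X * 1 ⊗ₜ[k] b) = slice A (f ∘ₗ LinearMap.mulRight k b) X := by
  induction X with
  | zero => simp
  | add X Y hX hY => simp only [add_mul, map_add, hX, hY]
  | tmul x y => simp

end SliceMul

section LeftHit

variable {k C : Type*} [CommSemiring k] [AddCommMonoid C] [Module k C] [Coalgebra k C]

/-- The left hit action `f ⇀ c = c₍₁₎ f(c₍₂₎)` of the dual of a coalgebra `C` on `C`. -/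
noncomputable def leftHit : Dual k C →ₗ[k] C →ₗ[k] C where
  toFun f := slice C f ∘ₗ comul
  map_add' f g := by ext; simp [slice, LinearMap.lTensor_add]
  map_smul' r f := by ext; simp [slice, LinearMap.lTensor_smul]

theorem leftHit_apply (f : Dual k C) (c : C) : leftHit f c = slice C f (comul c) := rfl

theorem comul_leftHit (f : Dual k C) (c : C) :
    comul (leftHit f c) = (leftHit f).lTensor C (comul c) :=
  calc comul (leftHit f c) = slice (C ⊗[k] C) f (comul.rTensor C (comul c)) :=
        (slice_rTensor comul f (comul c)).symm
    _ = (slice C f).lTensor C (comul.lTensor C (comul c)) := by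
        rw [← coassoc_symm_apply, slice_assoc_symm]
    _ = (leftHit f).lTensor C (comul c) := (LinearMap.lTensor_comp_apply ..).symm

theorem counit_leftHit (f : Dual k C) (c : C) : counit (R := k) (leftHit f c) = f c := by
  rw [leftHit_apply, ← slice_rTensor, rTensor_counit_comul, slice_tmul, smul_eq_mul, mul_one]

theorem leftHit_one {A : Type*} [Semiring A] [Bialgebra k A] (f : Dual k A) :
    leftHit f (1 : A) = f 1 • 1 := by
  simp [leftHit_apply, Algebra.TensorProduct.one_def]

end LeftHit

section Convolution

variable {k C : Type*} [CommRing k] [AddCommGroup C] [Module k C] [Coalgebra k C]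

theorem conv_eq_comp_leftHit (g f : Dual k C) : conv k C g f = g ∘ₗ leftHit f := by
  have mul_map : LinearMap.mul' k k ∘ₗ TensorProduct.map g f = g ∘ₗ slice C f := by
    ext
    simp [mul_comm]
  exact congrArg (· ∘ₗ comul) mul_map

theorem leftHit_conv (g f : Dual k C) (c : C) :
    leftHit (conv k C g f) c = leftHit g (leftHit f c) := by
  rw [leftHit_apply g, comul_leftHit, conv_eq_comp_leftHit]
  simp [leftHit_apply, slice, LinearMap.lTensor_comp]

end Convolution

section Antipode

variable {k H : Type*} [CommSemiring k] [Semiring H] [HopfAlgebra k H]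

theorem comul_convMul_includeRight_antipode :
    toConv comul * toConv ((includeRight : H →ₐ[k] H ⊗[k] H).toLinearMap ∘ₗ antipode k) =
      toConv (includeLeft : H →ₐ[k] H ⊗[k] H).toLinearMap := by
  have comul_eq : toConv comul = toConv (includeLeft : H →ₐ[k] H ⊗[k] H).toLinearMap *
      toConv (includeRight : H →ₐ[k] H ⊗[k] H).toLinearMap := by
    ext a
    simp [(ℛ k a).convMul_apply, (ℛ k a).eq]
  have includeRight_mul : toConv (includeRight : H →ₐ[k] H ⊗[k] H).toLinearMap *
      toConv ((includeRight : H →ₐ[k] H ⊗[k] H).toLinearMap ∘ₗ antipode k) = 1 := by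
    have := LinearMap.algHom_comp_convMul_distrib (includeRight : H →ₐ[k] H ⊗[k] H)
      (toConv LinearMap.id) (toConv (antipode k))
    rw [LinearMap.id_mul_antipode] at this
    refine (congrArg toConv this).symm.trans ?_
    ext
    simp [Algebra.algebraMap_eq_smul_one, Algebra.TensorProduct.one_def]
  rw [comul_eq, mul_assoc, includeRight_mul, mul_one]

theorem sum_comul_mul_one_tmul_antipode {a : H} {ι : Type*} (r : Repr k a ι) :
    ∑ i ∈ r.index, (comul (r.left i) : H ⊗[k] H) * 1 ⊗ₜ[k] antipode k (r.right i) =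
      a ⊗ₜ[k] 1 := by
  have := congrArg (fun f => f.ofConv a) (comul_convMul_includeRight_antipode (k := k) (H := H))
  exact (r.convMul_apply _ _).symm.trans this

end Antipode

section RightIntegral

/-- `t` is a right integral in the augmented algebra `A`: `t a = ε(a) t` for all `a`. -/
def IsRightIntegral (k : Type*) {A : Type*} [CommSemiring k] [Semiring A] [Bialgebra k A]
    (t : A) : Prop :=
  ∀ a, t * a = counit (R := k) a • t

theorem exists_isRightIntegral_of_frobenius {k A : Type*} [CommSemiring k] [Semiring A]
    [Bialgebra k A] (Φ : A ≃ₗ[k] Dual k A) (hΦ : ∀ a x z, Φ (x * a) z = Φ x (a * z)) :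
    ∃ (t : A) (ψ : Dual k A), IsRightIntegral k t ∧ ψ t = 1 := by
  refine ⟨Φ.symm counit, Φ 1, fun a => Φ.injective <| LinearMap.ext fun z => ?_, ?_⟩
  · simp [hΦ]
  · simpa using (hΦ (Φ.symm counit) 1 1).symm

variable {k H : Type*} [CommSemiring k] [Semiring H] [HopfAlgebra k H] {t : H}

theorem IsRightIntegral.comul_mul_tmul_one (ht : IsRightIntegral k t) (a : H) :
    (comul t : H ⊗[k] H) * a ⊗ₜ[k] 1 = comul t * 1 ⊗ₜ[k] antipode k a := by
  have absorb (b c : H) : (comul t : H ⊗[k] H) * (comul b * 1 ⊗ₜ[k] antipode k c) =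
      comul t * 1 ⊗ₜ[k] antipode k (counit (R := k) b • c) := by
    rw [← mul_assoc, ← Bialgebra.comul_mul, ht, map_smul, smul_mul_assoc, map_smul,
      TensorProduct.tmul_smul, mul_smul_comm]
  let r := ℛ k a
  rw [← sum_comul_mul_one_tmul_antipode r, Finset.mul_sum]
  simp_rw [absorb]
  rw [← Finset.mul_sum, ← TensorProduct.tmul_sum, ← map_sum, sum_counit_smul]

theorem IsRightIntegral.leftHit_mul (ht : IsRightIntegral k t) (f : Dual k H) (a : H) :
    leftHit f t * a = leftHit (f ∘ₗ LinearMap.mulRight k (antipode k a)) t := by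
  rw [leftHit_apply, leftHit_apply, ← slice_mul_one_tmul, ← ht.comul_mul_tmul_one,
    slice_mul_tmul_one]

theorem IsRightIntegral.leftHit_surjective (ht : IsRightIntegral k t) {φ : Dual k H}
    (hφ : leftHit φ t = 1) : Function.Surjective (leftHit.flip t : Dual k H →ₗ[k] H) := fun a =>
  ⟨φ ∘ₗ LinearMap.mulRight k (antipode k a), by
    rw [LinearMap.flip_apply, ← ht.leftHit_mul, hφ, one_mul]⟩

end RightIntegral

section Frobenius

variable {k H : Type*} [CommRing k] [Ring H] [HopfAlgebra k H] {t : H}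

theorem IsRightIntegral.exists_leftHit_eq_one [Module.Projective k H] (ht : IsRightIntegral k t)
    {ψ : Dual k H} (hψ : ψ t = 1) : ∃ φ : Dual k H, leftHit φ t = 1 := by
  obtain ⟨s, d, hsum⟩ := exists_eq_sum_slice_tmul (comul (R := k) (leftHit ψ t))
  refine ⟨∑ y ∈ s, conv k H (d y) ψ ∘ₗ LinearMap.mulRight k (antipode k (antipode k y)), ?_⟩
  calc leftHit (∑ y ∈ s, conv k H (d y) ψ ∘ₗ
          LinearMap.mulRight k (antipode k (antipode k y))) t
      = ∑ y ∈ s, slice H (d y) (comul (leftHit ψ t)) * antipode k y := by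
        simp_rw [map_sum, LinearMap.sum_apply, ← ht.leftHit_mul, leftHit_conv, ← leftHit_apply]
    _ = LinearMap.mul' k H ((antipode k).lTensor H (comul (leftHit ψ t))) := by
        conv_rhs => rw [hsum]
        simp
    _ = 1 := by
        rw [mul_antipode_lTensor_comul_apply, counit_leftHit, hψ, map_one]

theorem IsRightIntegral.leftHit_injective [Module.Finite k H] [Module.IsReflexive k H]
    (ht : IsRightIntegral k t) {φ : Dual k H} (hφ : leftHit φ t = 1) :
    Function.Injective (leftHit.flip t : Dual k H →ₗ[k] H) := by
  have hsurj := ht.leftHit_surjective hφ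
  exact OrzechProperty.injective_of_surjective_of_injective
    ((Module.evalEquiv k H).symm.toLinearMap ∘ₗ (leftHit.flip t).dualMap) (leftHit.flip t)
    ((Module.evalEquiv k H).symm.injective.comp (LinearMap.dualMap_injective_of_surjective hsurj))
    hsurj

theorem IsRightIntegral.isPerfPair_mul [Module.Finite k H] [Module.IsReflexive k H]
    (ht : IsRightIntegral k t) {φ : Dual k H} (hφ : leftHit φ t = 1) :
    ((LinearMap.mul k H).compr₂ φ).IsPerfPair := by
  refine (isPerfPair_of_surjective fun f => ⟨antipode k (leftHit f t), ?_⟩ :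
    ((LinearMap.mul k H).compr₂ φ).flip.IsPerfPair).flip
  apply ht.leftHit_injective hφ
  calc leftHit (φ ∘ₗ LinearMap.mulRight k (antipode k (leftHit f t))) t
      = leftHit φ t * leftHit f t := (ht.leftHit_mul φ (leftHit f t)).symm
    _ = leftHit f t := by rw [hφ, one_mul]

end Frobenius

section DualLeftIntegral

/-- `φ` is a left integral in the convolution algebra dual to the bialgebra `A`, whose augmentation
is `g ↦ g 1`. -/
def IsDualLeftIntegral {k A : Type*} [CommRing k] [Ring A] [Bialgebra k A] (φ : Dual k A) : Prop :=
  ∀ g : Dual k A, conv k A g φ = g 1 • φ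

variable {k A : Type*} [CommRing k] [Ring A] [Bialgebra k A] {t : A}

theorem isDualLeftIntegral_of_leftHit_eq_one
    (hinj : Function.Injective (leftHit.flip t : Dual k A →ₗ[k] A)) {φ : Dual k A}
    (hφ : leftHit φ t = 1) : IsDualLeftIntegral φ := fun g => hinj <| by
  simp [leftHit_conv, hφ, leftHit_one]

theorem IsDualLeftIntegral.leftHit_eq_smul_one [Module.Projective k A] {f : Dual k A}
    (hf : IsDualLeftIntegral f) (a : A) : leftHit f a = f a • 1 := by
  rw [← sub_eq_zero, ← Module.forall_dual_apply_eq_zero_iff k]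
  intro g
  have : g (leftHit f a) = g 1 * f a := by
    simpa [conv_eq_comp_leftHit] using LinearMap.congr_fun (hf g) a
  simp [this, mul_comm]

theorem IsDualLeftIntegral.eq_smul [Module.Projective k A]
    (hinj : Function.Injective (leftHit.flip t : Dual k A →ₗ[k] A)) {φ f : Dual k A}
    (hφ : leftHit φ t = 1) (hf : IsDualLeftIntegral f) : f = f t • φ := hinj <| by
  simp [hf.leftHit_eq_smul_one, hφ]

end DualLeftIntegral

/-- If a finitely generated projective Hopf `k`-algebra `H` is a Frobenius algebra
(`H ≅ H*` as right `H`-modules), then `H` is an FH-algebra: there is a left integral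
`φ ∈ H*` which is a Frobenius homomorphism and which freely generates the space of left
integrals in `H*` (so that space is free of rank 1). -/
theorem frobenius_hopf_is_FH (k H : Type*) [CommRing k] [Ring H] [HopfAlgebra k H]
    [Module.Finite k H] [Module.Projective k H]
    (hFrob : ∃ Φ : H ≃ₗ[k] Module.Dual k H, ∀ a x z : H, Φ (x * a) z = Φ x (a * z)) :
    ∃ φ : Module.Dual k H,
      (∀ g : Module.Dual k H, conv k H g φ = g 1 • φ) ∧
      Function.Bijective (fun a : H => φ ∘ₗ LinearMap.mulLeft k a) ∧
      (∀ f : Module.Dual k H,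
        (∀ g : Module.Dual k H, conv k H g f = g 1 • f) → ∃! c : k, f = c • φ) := by
  obtain ⟨Φ, hΦ⟩ := hFrob
  obtain ⟨t, ψ, ht, hψ⟩ := exists_isRightIntegral_of_frobenius Φ hΦ
  obtain ⟨φ, hφ⟩ := ht.exists_leftHit_eq_one hψ
  have hinj := ht.leftHit_injective hφ
  have hφt : φ t = 1 := by rw [← counit_leftHit, hφ, Bialgebra.counit_one]
  have := ht.isPerfPair_mul hφ
  refine ⟨φ, isDualLeftIntegral_of_leftHit_eq_one hinj hφ,
    LinearMap.IsPerfPair.bijective_left ((LinearMap.mul k H).compr₂ φ),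
    fun f hf => ⟨f t, IsDualLeftIntegral.eq_smul hinj hφ hf, fun c hc => ?_⟩⟩
  simp [hc, hφt]
end
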